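/- Let L, M, i, j be non-negative integers with M ≥ L ≥ i+j. Let V(n; i, j, L, M) denote the number of pairs (π₁, π₂) where π₁ is a partition into exactly i distinct a-parts each ≤ M−j, π₂ is a partition into exactly j distinct b-parts each ≤ L, and the combined sum of parts is n. For non-negative integers r, s, t, l, let S(n; r, s, t, l, L, M) denote the number of Type-1 partitions of n having exactly r parts of color a with subscript ≤ M, exactly s parts of color b with subscript ≤ L−l, exactly t parts of color ab with subscript ≤ M, such that exactly l of the parts of color a or ab have subscript ≥ L−l+2, and no part (of any color) has subscript equal to L−l+1. Then V(n; i, j, L, M) = \sum_{r+t=i, s+t=j} \sum_{l ≥ 0} S(n; r, s, t, l, L, M). -/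

import Mathlib

/-- The three colors `a`, `b`, `ab` of the Alladi–Gordon weighted words. -/
inductive PColor | a | b | ab
deriving DecidableEq

/-- A colored part: a color together with a subscript. -/
abbrev CPart := PColor × ℕ

/-- A Type-1 partition: a list of valid colored symbols (`a_m, b_m` for `m ≥ 1`,
`ab_m` for `m ≥ 2`) whose subscripts decrease with gap `≥ 1` between consecutive
symbols, the gap being `≥ 2` when the larger symbol has color `ab`, or the larger
symbol has color `a` and the smaller one has color `b`. -/
def IsType1 (π : List CPart) : Prop :=
  (∀ p ∈ π, 1 ≤ p.2 ∧ (p.1 = PColor.ab → 2 ≤ p.2)) ∧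
  π.Chain' (fun x y => y.2 + 1 ≤ x.2 ∧
    ((x.1 = PColor.ab ∨ (x.1 = PColor.a ∧ y.1 = PColor.b)) → y.2 + 2 ≤ x.2))

/-- Number of parts of a given color. -/
def colorCount (c : PColor) (π : List CPart) : ℕ := (π.filter (fun p => p.1 = c)).length

/-- The sum of the subscripts. -/
def wt (π : List CPart) : ℕ := (π.map Prod.snd).sum

/-- `Vb n i j L M`: the number of vector partitions `(π₁, π₂)` of `n` where `π₁` has
exactly `i` distinct a-parts, each `≤ M - j`, and `π₂` has exactly `j` distinct
b-parts, each `≤ L`. -/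
noncomputable def Vb (n i j L M : ℕ) : ℕ :=
  {p : List ℕ × List ℕ | p.1.Chain' (· > ·) ∧ p.2.Chain' (· > ·) ∧
    (∀ x ∈ p.1, 0 < x ∧ (x : ℤ) ≤ (M : ℤ) - (j : ℤ)) ∧
    (∀ x ∈ p.2, 0 < x ∧ x ≤ L) ∧
    p.1.length = i ∧ p.2.length = j ∧ p.1.sum + p.2.sum = n}.ncard

/-- `Sb n r s t l L M`: the number of Type-1 partitions of `n` with exactly `r` a-parts
each of subscript `≤ M`, exactly `s` b-parts each of subscript `≤ L - l`, exactly `t`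
ab-parts each of subscript `≤ M`, such that exactly `l` of the parts of color `a` or
`ab` have subscript `≥ L - l + 2`, and no part has subscript `= L - l + 1`. -/
noncomputable def Sb (n r s t l L M : ℕ) : ℕ :=
  {π : List CPart | IsType1 π ∧
    colorCount PColor.a π = r ∧ (∀ p ∈ π, p.1 = PColor.a → p.2 ≤ M) ∧
    colorCount PColor.b π = s ∧
      (∀ p ∈ π, p.1 = PColor.b → (p.2 : ℤ) ≤ (L : ℤ) - (l : ℤ)) ∧
    colorCount PColor.ab π = t ∧ (∀ p ∈ π, p.1 = PColor.ab → p.2 ≤ M) ∧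
    (π.filter (fun p => (p.1 = PColor.a ∨ p.1 = PColor.ab) ∧
      (L : ℤ) - (l : ℤ) + 2 ≤ (p.2 : ℤ))).length = l ∧
    (∀ p ∈ π, (p.2 : ℤ) ≠ (L : ℤ) - (l : ℤ) + 1) ∧
    wt π = n}.ncard

/-!
Let `V(L, M, i, j)` be the generating polynomial in `q` of the pairs counted by `Vb · i j L M`, and
`S(L, M, i, j)` that of the pairs `(π, l)` of a Type-1 partition and an integer counted on the other
side. If `L ≤ M` and `π` occurs in `S(L+1, M+2, i, j)`, then a part `a_{M+2}` or `ab_{M+2}` of `π`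
is the largest one and has a subscript above `L + 2 - l`, so deleting it lowers `l` by one; hence
`S(L+1, M+2, i, j) = S(L+1, M+1, i, j) + q^(M+2) S(L, M+1, i-1, j) + q^(M+2) S(L, M, i-1, j-1)`.
The Pascal recursions of the Gaussian binomial coefficients give the same recursion for `V`. It
reduces the equality of `V` and `S` to the cases `L = 0`, where `i + j ≤ 0`, and `L = M`.

If `L = M`, then `l = 0`, since fewer than `l > 0` subscripts lie between `L + 2 - l` and `L`. So
`S(L, L, i, j)` enumerates all Type-1 partitions with subscripts at most `L`. Those with `a`- and
`ab`-parts at most `L + 1` but `b`-parts at most `L` correspond to `V(L, L + 1, i, j)`: both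
equalities follow by a joint induction on `L`, again by deleting the largest part.
-/

section

open Polynomial

variable {α β : Type*}

/-! ### Generating polynomials and finiteness -/

/-- The generating polynomial `∑ x ∈ S, X ^ w x` of a finite set `S` with respect to a weight `w`
(`0` if `S` is infinite). -/
noncomputable def weightGF (w : α → ℕ) (S : Set α) : ℕ[X] := ∑ᶠ x ∈ S, X ^ w x

@[simp]
theorem weightGF_empty (w : α → ℕ) : weightGF w ∅ = 0 := finsum_mem_empty

@[simp]
theorem weightGF_singleton (w : α → ℕ) (a : α) : weightGF w {a} = X ^ w a := finsum_mem_singleton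

theorem weightGF_image {w : α → ℕ} {v : β → ℕ} {f : β → α} {m : ℕ} {S : Set β}
    (hS : S.Finite) (hf : Function.Injective f) (hw : ∀ x, w (f x) = m + v x) :
    weightGF w (f '' S) = X ^ m * weightGF v S := by
  rw [weightGF, weightGF, finsum_mem_image hf.injOn, mul_finsum_mem' _ _ hS]
  simp only [hw, pow_add]

theorem weightGF_union_image {w : α → ℕ} {v : β → ℕ} {f : β → α} {m : ℕ} {S : Set α} {T : Set β}
    (hS : S.Finite) (hT : T.Finite) (hf : Function.Injective f) (hw : ∀ x, w (f x) = m + v x)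
    (hdisj : ∀ x ∈ T, f x ∉ S) :
    weightGF w (S ∪ f '' T) = weightGF w S + X ^ m * weightGF v T := by
  have hST : Disjoint S (f '' T) := by
    rw [Set.disjoint_right]
    rintro _ ⟨x, hx, rfl⟩
    exact hdisj x hx
  rw [← weightGF_image hT hf hw]
  exact finsum_mem_union hST hS (hT.image f)

theorem weightGF_prod {w : α → ℕ} {v : β → ℕ} {S : Set α} {T : Set β}
    (hS : S.Finite) (hT : T.Finite) :
    weightGF (fun p : α × β => w p.1 + v p.2) (S ×ˢ T) = weightGF w S * weightGF v T := by
  classical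
  rw [weightGF, weightGF, weightGF, finsum_mem_eq_finite_toFinset_sum _ hS,
    finsum_mem_eq_finite_toFinset_sum _ hT, finsum_mem_eq_finite_toFinset_sum _ (hS.prod hT),
    Finset.sum_mul_sum, ← Finset.sum_product', Set.Finite.toFinset_prod]
  simp only [pow_add]

theorem coeff_weightGF {w : α → ℕ} {S : Set α} (hS : S.Finite) (n : ℕ) :
    (weightGF w S).coeff n = {x ∈ S | w x = n}.ncard := by
  classical
  rw [weightGF, finsum_mem_eq_finite_toFinset_sum _ hS, finsetSum_coeff,
    Set.ncard_eq_toFinset_card _ (hS.sep _)]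
  simp only [coeff_X_pow, Finset.sum_boole, Nat.cast_id]
  congr 1
  ext x
  simp [eq_comm]

theorem finsum_ncard_fiber {S : Set α} (hS : S.Finite) (f : α → β) :
    ∑ᶠ b, {x ∈ S | f x = b}.ncard = S.ncard := by
  classical
  rw [Set.ncard_eq_toFinset_card S hS, Finset.card_eq_sum_card_image f,
    finsum_eq_sum_of_support_subset (s := hS.toFinset.image f)]
  · refine Finset.sum_congr rfl fun b _ => ?_
    rw [← Set.ncard_coe_finset]
    congr 1
    ext x
    simp
  · intro b hb
    obtain ⟨x, hx, rfl⟩ := Set.nonempty_of_ncard_ne_zero hb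
    exact Finset.mem_image_of_mem f (hS.mem_toFinset.2 hx)

theorem finite_setOf_pairwise_list {r : α → α → Prop} [Std.Asymm r] {s : Set α}
    (hs : s.Finite) : {l : List α | l.Pairwise r ∧ ∀ x ∈ l, x ∈ s}.Finite := by
  classical
  refine Set.Finite.of_finite_image (f := List.toFinset) ?_ ?_
  · refine hs.toFinset.powerset.finite_toSet.subset ?_
    rintro _ ⟨l, ⟨-, hl⟩, rfl⟩
    exact Finset.mem_powerset.2 fun x hx => hs.mem_toFinset.2 (hl x (List.mem_toFinset.1 hx))
  · rintro l ⟨hl, -⟩ l' ⟨hl', -⟩ h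
    exact (List.perm_of_nodup_nodup_toFinset_eq hl.nodup hl'.nodup h).eq_of_pairwise
      (fun a b _ _ hab hba => (Std.Asymm.asymm a b hab hba).elim) hl hl'

/-! ### Pairs of partitions into distinct parts -/

/-- The decreasing lists of `k` positive integers at most `N`. The length is an integer so that
recursions may lower it below `0`, where the set is empty. -/
def distinctLists (N : ℕ) (k : ℤ) : Set (List ℕ) :=
  {l | l.Pairwise (· > ·) ∧ (∀ x ∈ l, 0 < x ∧ x ≤ N) ∧ (l.length : ℤ) = k}

theorem distinctLists_finite (N : ℕ) (k : ℤ) : (distinctLists N k).Finite :=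
  (finite_setOf_pairwise_list (Set.finite_Iic N)).subset
    fun _ hl => ⟨hl.1, fun x hx => (hl.2.1 x hx).2⟩

theorem distinctLists_zero (k : ℤ) : distinctLists 0 k = if k = 0 then {[]} else ∅ := by
  ext l
  cases l with
  | nil => split_ifs <;> simp_all [distinctLists, eq_comm]
  | cons m l =>
    have : (m :: l) ∉ distinctLists 0 k := fun h => by
      have := h.2.1 m List.mem_cons_self
      omega
    split_ifs <;> simpa

theorem distinctLists_succ (N : ℕ) (k : ℤ) :
    distinctLists (N + 1) k =
      distinctLists N k ∪ List.cons (N + 1) '' distinctLists N (k - 1) := by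
  ext l
  constructor
  · rintro ⟨hl, hN, hk⟩
    cases l with
    | nil => exact Or.inl ⟨hl, by simp, hk⟩
    | cons m l =>
      rw [List.pairwise_cons] at hl
      rw [List.forall_mem_cons] at hN
      rw [List.length_cons] at hk
      have hlt : ∀ x ∈ l, 0 < x ∧ x < m := fun x hx => ⟨(hN.2 x hx).1, hl.1 x hx⟩
      obtain hm | rfl : m ≤ N ∨ m = N + 1 := by omega
      · refine Or.inl ⟨List.pairwise_cons.2 hl, List.forall_mem_cons.2 ⟨⟨hN.1.1, hm⟩, ?_⟩, hk⟩
        grind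
      · exact Or.inr ⟨l, ⟨hl.2, by grind, by omega⟩, rfl⟩
  · rintro (⟨hl, hN, hk⟩ | ⟨l, ⟨hl, hN, hk⟩, rfl⟩)
    · exact ⟨hl, by grind, hk⟩
    · exact ⟨List.pairwise_cons.2 ⟨by grind, hl⟩, by grind, by grind⟩

/-- The generating polynomial of partitions into `k` distinct parts at most `N`, that is
`q ^ (k * (k + 1) / 2)` times the Gaussian binomial coefficient of `N` and `k`. -/
noncomputable def distinctGF (N : ℕ) (k : ℤ) : ℕ[X] := weightGF List.sum (distinctLists N k)

theorem distinctGF_zero (k : ℤ) : distinctGF 0 k = if k = 0 then 1 else 0 := by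
  rw [distinctGF, distinctLists_zero]
  split_ifs <;> simp

theorem distinctGF_succ (N : ℕ) (k : ℤ) :
    distinctGF (N + 1) k = distinctGF N k + X ^ (N + 1) * distinctGF N (k - 1) := by
  rw [distinctGF, distinctLists_succ, weightGF_union_image (distinctLists_finite _ _)
    (distinctLists_finite _ _) List.cons_injective fun _ => List.sum_cons]
  · rfl
  · intro l _ hl
    have := hl.2.1 (N + 1) List.mem_cons_self
    omega

theorem distinctGF_of_neg (N : ℕ) {k : ℤ} (hk : k < 0) : distinctGF N k = 0 := by
  have : distinctLists N k = ∅ := Set.eq_empty_of_forall_notMem fun l hl => by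
    have := hl.2.2
    omega
  rw [distinctGF, this, weightGF_empty]

theorem distinctGF_of_lt {N : ℕ} {k : ℤ} (hk : N < k) : distinctGF N k = 0 := by
  induction N generalizing k with
  | zero => simp [distinctGF_zero, (show k ≠ 0 by omega)]
  | succ N ih => simp [distinctGF_succ, ih (k := k) (by omega), ih (k := k - 1) (by omega)]

theorem distinctGF_zero_right (N : ℕ) : distinctGF N 0 = 1 := by
  induction N with
  | zero => simp [distinctGF_zero]
  | succ N ih => simp [distinctGF_succ, ih, distinctGF_of_neg]

/-- Subtracting `1` from each part leaves `k` distinct parts at most `N`, one possibly `0`. -/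
theorem distinctGF_succ' (N k : ℕ) :
    distinctGF (N + 1) k = X ^ k * (distinctGF N k + distinctGF N (k - 1)) := by
  induction N generalizing k with
  | zero =>
    rcases k with _ | _ | k
    · simp [distinctGF_succ, distinctGF_zero]
    · simp [distinctGF_succ, distinctGF_zero]
    · rw [distinctGF_of_lt (by omega), distinctGF_of_lt (by omega), distinctGF_of_lt (by omega)]
      simp
  | succ N ih =>
    cases k with
    | zero => simp [distinctGF_succ (N + 1), distinctGF_of_neg]
    | succ k =>
      have hk : ((k + 1 : ℕ) : ℤ) - 1 = k := by simp
      rw [hk]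
      calc distinctGF (N + 1 + 1) (k + 1 : ℕ)
          = distinctGF (N + 1) (k + 1 : ℕ) + X ^ (N + 2) * distinctGF (N + 1) k := by
            rw [distinctGF_succ (N + 1), hk]
        _ = X ^ (k + 1) * (distinctGF N (k + 1 : ℕ) + distinctGF N k) +
              X ^ (N + 2) * (X ^ k * (distinctGF N k + distinctGF N (k - 1))) := by
            rw [ih (k + 1), ih k, hk]
        _ = X ^ (k + 1) * ((distinctGF N (k + 1 : ℕ) + X ^ (N + 1) * distinctGF N k) +
              (distinctGF N k + X ^ (N + 1) * distinctGF N (k - 1))) := by ring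
        _ = X ^ (k + 1) * (distinctGF (N + 1) (k + 1 : ℕ) + distinctGF (N + 1) k) := by
            rw [distinctGF_succ N (k + 1 : ℕ), distinctGF_succ N k, hk]

/-- The generating polynomial of the pairs of partitions counted by `Vb · i j L M`. -/
noncomputable def pairGF (L M : ℕ) (i j : ℤ) : ℕ[X] := distinctGF (M - j).toNat i * distinctGF L j

theorem Vb_eq_coeff_pairGF (n i j L M : ℕ) : Vb n i j L M = (pairGF L M i j).coeff n := by
  have hA := distinctLists_finite ((M : ℤ) - j).toNat i
  have hB := distinctLists_finite L j
  rw [pairGF, distinctGF, distinctGF, ← weightGF_prod hA hB, coeff_weightGF (hA.prod hB), Vb]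
  congr 1
  ext ⟨x, y⟩
  have hbound (z : ℕ) : 0 < z ∧ (z : ℤ) ≤ M - j ↔ 0 < z ∧ z ≤ ((M : ℤ) - j).toNat := by omega
  simp only [distinctLists, Set.mem_ofPred_eq, Set.mem_prod, hbound, Nat.cast_inj,
    ← List.isChain_iff_pairwise]
  change _ ∧ _ ∧ _ ↔ _
  tauto

theorem pairGF_zero (i j : ℤ) : pairGF 0 0 i j = if i = 0 ∧ j = 0 then 1 else 0 := by
  by_cases hj : j = 0
  · simp [pairGF, distinctGF_zero, hj]
  · simp [pairGF, distinctGF_zero, hj]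

theorem pairGF_of_add_nonpos (L M : ℕ) {i j : ℤ} (hij : i + j ≤ 0) :
    pairGF L M i j = if i = 0 ∧ j = 0 then 1 else 0 := by
  unfold pairGF
  rcases lt_or_ge i 0 with hi | hi
  · simp [distinctGF_of_neg _ hi, hi.ne]
  rcases lt_or_ge j 0 with hj | hj
  · simp [distinctGF_of_neg _ hj, hj.ne]
  · obtain ⟨rfl, rfl⟩ : i = 0 ∧ j = 0 := by omega
    simp [distinctGF_zero_right]

theorem pairGF_zero_one (i j : ℤ) : pairGF 0 1 i j = pairGF 0 0 i j + X * pairGF 0 0 (i - 1) j := by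
  by_cases hj : j = 0
  · subst hj
    simp [pairGF, distinctGF_succ, distinctGF_zero]
  · simp [pairGF, distinctGF_zero, hj]

theorem pairGF_succ_succ (L M : ℕ) (i j : ℤ) :
    pairGF (L + 1) (M + 1) i j = pairGF L (M + 1) i j + X ^ (L + 1) * pairGF L M i (j - 1) := by
  rw [pairGF, pairGF, pairGF, distinctGF_succ,
    show ((M : ℤ) - (j - 1)) = (M + 1 : ℕ) - j by push_cast; ring]
  ring

theorem pairGF_succ_add_two {L M : ℕ} (hLM : L ≤ M) (i j : ℤ) :
    pairGF (L + 1) (M + 2) i j = pairGF (L + 1) (M + 1) i j +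
      X ^ (M + 2) * pairGF L (M + 1) (i - 1) j + X ^ (M + 2) * pairGF L M (i - 1) (j - 1) := by
  unfold pairGF
  rcases lt_or_ge j 0 with hj | hj
  · simp [distinctGF_of_neg _ hj, distinctGF_of_neg _ (show j - 1 < 0 by omega)]
  rcases lt_or_ge (M + 1 : ℤ) j with hjM | hjM
  · simp [distinctGF_of_lt (show ((L + 1 : ℕ) : ℤ) < j by omega),
      distinctGF_of_lt (show (L : ℤ) < j by omega),
      distinctGF_of_lt (show (L : ℤ) < j - 1 by omega)]
  lift j to ℕ using hj
  obtain ⟨K, hK⟩ : ∃ K, M + 1 = K + j := ⟨M + 1 - j, by omega⟩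
  rw [show (((M + 2 : ℕ) : ℤ) - j).toNat = K + 1 by omega,
    show (((M + 1 : ℕ) : ℤ) - j).toNat = K by omega,
    show ((M : ℤ) - (j - 1)).toNat = K by omega,
    show M + 2 = (K + 1) + j by omega, distinctGF_succ K, distinctGF_succ' L]
  ring

/-! ### Type-1 partitions with bounded subscripts -/

instance : Fintype PColor where
  elems := {.a, .b, .ab}
  complete c := by cases c <;> decide

/-- The condition imposed by `IsType1` on consecutive parts `x`, `y`. -/
def Type1Gap (x y : CPart) : Prop :=
  y.2 + 1 ≤ x.2 ∧ (x.1 = .ab ∨ (x.1 = .a ∧ y.1 = .b) → y.2 + 2 ≤ x.2)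

instance : IsTrans CPart Type1Gap :=
  ⟨fun _ _ _ hxy hyz => ⟨by have := hxy.1; have := hyz.1; omega,
    fun _ => by have := hxy.1; have := hyz.1; omega⟩⟩

instance : Std.Asymm Type1Gap := ⟨fun _ _ h h' => by have := h.1; have := h'.1; omega⟩

theorem IsType1.pairwise {π : List CPart} (h : IsType1 π) : π.Pairwise Type1Gap :=
  List.isChain_iff_pairwise.1 h.2

theorem isType1_nil : IsType1 [] := ⟨by simp, List.isChain_nil⟩

theorem isType1_cons {p : CPart} {π : List CPart} :
    IsType1 (p :: π) ↔
      (1 ≤ p.2 ∧ (p.1 = .ab → 2 ≤ p.2)) ∧ (∀ x ∈ π, Type1Gap p x) ∧ IsType1 π := by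
  have h (π : List CPart) : IsType1 π ↔
      (∀ p ∈ π, 1 ≤ p.2 ∧ (p.1 = .ab → 2 ≤ p.2)) ∧ π.Pairwise Type1Gap :=
    and_congr_right fun _ => List.isChain_iff_pairwise (R := Type1Gap)
  rw [h, h, List.forall_mem_cons, List.pairwise_cons]
  tauto

theorem wt_cons (p : CPart) (π : List CPart) : wt (p :: π) = p.2 + wt π := by
  simp [wt]

theorem colorCount_cons (c : PColor) (p : CPart) (π : List CPart) :
    colorCount c (p :: π) = colorCount c [p] + colorCount c π := by
  rw [colorCount, ← List.singleton_append, List.filter_append, List.length_append]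
  rfl

/-- The number of parts whose color contains the letter `a`. -/
def aCount (π : List CPart) : ℕ := colorCount .a π + colorCount .ab π

/-- The number of parts whose color contains the letter `b`. -/
def bCount (π : List CPart) : ℕ := colorCount .b π + colorCount .ab π

theorem aCount_cons (p : CPart) (π : List CPart) : aCount (p :: π) = aCount [p] + aCount π := by
  simp only [aCount, colorCount_cons _ p π]
  omega

theorem bCount_cons (p : CPart) (π : List CPart) : bCount (p :: π) = bCount [p] + bCount π := by
  simp only [bCount, colorCount_cons _ p π]
  omega

theorem length_le_aCount_add_bCount (π : List CPart) : π.length ≤ aCount π + bCount π := by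
  induction π with
  | nil => exact Nat.zero_le _
  | cons p π ih =>
    have hp : 1 ≤ aCount [p] + bCount [p] := by
      obtain ⟨_ | _ | _, _⟩ := p <;> simp [aCount, bCount, colorCount]
    rw [List.length_cons, aCount_cons, bCount_cons]
    omega

/-- The largest subscript allowed for the color `c`: `B` for `b`, and `A` for `a` and `ab`. -/
def subscriptBound (B A : ℕ) (c : PColor) : ℕ := if c = .b then B else A

theorem subscriptBound_le {B A K : ℕ} (hB : B ≤ K) (hA : A ≤ K) (c : PColor) :
    subscriptBound B A c ≤ K := by
  unfold subscriptBound
  split_ifs <;> assumption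

/-- The Type-1 partitions with `b`-parts at most `B` and `a`- and `ab`-parts at most `A`, in which
`i` parts have a color containing `a` and `j` a color containing `b`. -/
def type1Set (B A : ℕ) (i j : ℤ) : Set (List CPart) :=
  {π | IsType1 π ∧ (∀ p ∈ π, p.2 ≤ subscriptBound B A p.1) ∧ aCount π = i ∧ bCount π = j}

theorem type1Set_finite (B A : ℕ) (i j : ℤ) : (type1Set B A i j).Finite := by
  refine (finite_setOf_pairwise_list (r := Type1Gap)
    (Set.finite_univ.prod (Set.finite_Iic (max B A)))).subset ?_
  rintro π ⟨hπ, hle, -⟩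
  exact ⟨hπ.pairwise, fun p hp => ⟨Set.mem_univ _,
    (hle p hp).trans (subscriptBound_le (le_max_left B A) (le_max_right B A) p.1)⟩⟩

theorem type1Set_mono {B B' A A' : ℕ} (hB : B ≤ B') (hA : A ≤ A') (i j : ℤ) :
    type1Set B A i j ⊆ type1Set B' A' i j := by
  rintro π ⟨hπ, hle, hij⟩
  refine ⟨hπ, fun p hp => (hle p hp).trans ?_, hij⟩
  unfold subscriptBound
  split_ifs <;> assumption

theorem type1Set_eq_ite {B A : ℕ} {i j : ℤ} (h : ∀ π ∈ type1Set B A i j, π = []) :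
    type1Set B A i j = if i = 0 ∧ j = 0 then {[]} else ∅ := by
  have hnil : [] ∈ type1Set B A i j ↔ i = 0 ∧ j = 0 := by
    simp [type1Set, isType1_nil, aCount, bCount, colorCount, eq_comm]
  ext π
  split_ifs with hij
  · exact ⟨h π, fun hπ => hπ ▸ hnil.2 hij⟩
  · exact iff_of_false (fun hπ => hij (hnil.1 (h π hπ ▸ hπ))) (Set.notMem_empty π)

theorem type1Set_zero (i j : ℤ) : type1Set 0 0 i j = if i = 0 ∧ j = 0 then {[]} else ∅ := by
  refine type1Set_eq_ite fun π hπ => List.eq_nil_iff_forall_not_mem.2 fun p hp => ?_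
  have hpos := (hπ.1.1 p hp).1
  have hle := hπ.2.1 p hp
  simp only [subscriptBound, ite_self] at hle
  omega

theorem type1Set_of_add_nonpos (B A : ℕ) {i j : ℤ} (hij : i + j ≤ 0) :
    type1Set B A i j = if i = 0 ∧ j = 0 then {[]} else ∅ := by
  refine type1Set_eq_ite fun π ⟨_, _, hi, hj⟩ => List.eq_nil_of_length_eq_zero ?_
  have := length_le_aCount_add_bCount π
  omega

theorem cons_mem_type1Set {B A B' A' : ℕ} {i j : ℤ} {p : CPart} {π : List CPart}
    (hp : 1 ≤ p.2 ∧ (p.1 = .ab → 2 ≤ p.2)) (hpB : p.2 ≤ subscriptBound B A p.1)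
    (hgap : ∀ x : CPart, 1 ≤ x.2 →
      (Type1Gap p x ∧ x.2 ≤ subscriptBound B A x.1 ↔ x.2 ≤ subscriptBound B' A' x.1)) :
    p :: π ∈ type1Set B A i j ↔ π ∈ type1Set B' A' (i - aCount [p]) (j - bCount [p]) := by
  have hbound (hπ : IsType1 π) :
      (∀ x ∈ π, Type1Gap p x) ∧ (∀ x ∈ π, x.2 ≤ subscriptBound B A x.1) ↔
        ∀ x ∈ π, x.2 ≤ subscriptBound B' A' x.1 := by
    rw [← forall₂_and]
    exact forall₂_congr fun x hx => hgap x (hπ.1 x hx).1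
  have hi : ((aCount [p] + aCount π : ℕ) : ℤ) = i ↔ (aCount π : ℤ) = i - aCount [p] := by omega
  have hj : ((bCount [p] + bCount π : ℕ) : ℤ) = j ↔ (bCount π : ℤ) = j - bCount [p] := by omega
  simp only [type1Set, Set.mem_ofPred_eq, isType1_cons, List.forall_mem_cons, aCount_cons p π,
    bCount_cons p π, hi, hj]
  tauto

theorem cons_b_mem_type1Set {A : ℕ} {i j : ℤ} {π : List CPart} :
    (.b, A + 1) :: π ∈ type1Set (A + 1) (A + 1) i j ↔ π ∈ type1Set A A i (j - 1) := by
  rw [cons_mem_type1Set (B' := A) (A' := A) (by simp) (by simp [subscriptBound])]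
  · simp [aCount, bCount, colorCount]
  · rintro ⟨_ | _ | _, x⟩ - <;> grind [Type1Gap, subscriptBound]

theorem cons_a_one_mem_type1Set {i j : ℤ} {π : List CPart} :
    (.a, 1) :: π ∈ type1Set 0 1 i j ↔ π ∈ type1Set 0 0 (i - 1) j := by
  rw [cons_mem_type1Set (B' := 0) (A' := 0) (by simp) (by simp [subscriptBound])]
  · simp [aCount, bCount, colorCount]
  · rintro ⟨_ | _ | _, x⟩ hx <;> grind [Type1Gap, subscriptBound]

theorem cons_a_mem_type1Set {B A : ℕ} {i j : ℤ} {π : List CPart} :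
    (.a, A + 2) :: π ∈ type1Set B (A + 2) i j ↔ π ∈ type1Set (min B A) (A + 1) (i - 1) j := by
  rw [cons_mem_type1Set (B' := min B A) (A' := A + 1) (by simp) (by simp [subscriptBound])]
  · simp [aCount, bCount, colorCount]
  · rintro ⟨_ | _ | _, x⟩ - <;> grind [Type1Gap, subscriptBound]

theorem cons_ab_mem_type1Set {B A : ℕ} {i j : ℤ} {π : List CPart} :
    (.ab, A + 2) :: π ∈ type1Set B (A + 2) i j ↔ π ∈ type1Set (min B A) A (i - 1) (j - 1) := by
  rw [cons_mem_type1Set (B' := min B A) (A' := A) (by simp) (by simp [subscriptBound])]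
  · simp [aCount, bCount, colorCount]
  · rintro ⟨_ | _ | _, x⟩ - <;> grind [Type1Gap, subscriptBound]

theorem cons_notMem_type1Set {B A : ℕ} {i j : ℤ} {p : CPart} (hp : subscriptBound B A p.1 < p.2)
    (π : List CPart) : p :: π ∉ type1Set B A i j :=
  fun h => hp.not_ge (h.2.1 p List.mem_cons_self)

theorem IsType1.exists_eq_cons {π : List CPart} (hπ : IsType1 π) {p : CPart} (hp : p ∈ π)
    (hmax : ∀ x ∈ π, x.2 ≤ p.2) : ∃ π', π = p :: π' := by
  cases π with
  | nil => simp at hp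
  | cons q π =>
    obtain rfl | hp := List.mem_cons.1 hp
    · exact ⟨π, rfl⟩
    · have := ((isType1_cons.1 hπ).2.1 p hp).1
      have := hmax q List.mem_cons_self
      omega

theorem type1Set_zero_one (i j : ℤ) :
    type1Set 0 1 i j = type1Set 0 0 i j ∪ List.cons (.a, 1) '' type1Set 0 0 (i - 1) j := by
  apply Set.Subset.antisymm
  · intro π h
    have hle (p : CPart) (hp : p ∈ π) : p.2 ≤ 1 :=
      (h.2.1 p hp).trans (subscriptBound_le zero_le_one le_rfl p.1)
    by_cases ha : (.a, 1) ∈ π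
    · obtain ⟨π', rfl⟩ := h.1.exists_eq_cons ha hle
      exact Or.inr ⟨π', cons_a_one_mem_type1Set.1 h, rfl⟩
    · refine Or.inl ⟨h.1, ?_, h.2.2⟩
      rintro ⟨c, m⟩ hp
      have hm := h.2.1 _ hp
      have := h.1.1 _ hp
      have := hle _ hp
      cases c <;> grind [subscriptBound]
  · rintro _ (h | ⟨π, h, rfl⟩)
    · exact type1Set_mono le_rfl zero_le_one i j h
    · exact cons_a_one_mem_type1Set.2 h

theorem type1Set_succ_succ (A : ℕ) (i j : ℤ) :
    type1Set (A + 1) (A + 1) i j =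
      type1Set A (A + 1) i j ∪ List.cons (.b, A + 1) '' type1Set A A i (j - 1) := by
  apply Set.Subset.antisymm
  · intro π h
    have hle (p : CPart) (hp : p ∈ π) : p.2 ≤ A + 1 :=
      (h.2.1 p hp).trans (subscriptBound_le le_rfl le_rfl p.1)
    by_cases hb : (.b, A + 1) ∈ π
    · obtain ⟨π', rfl⟩ := h.1.exists_eq_cons hb hle
      exact Or.inr ⟨π', cons_b_mem_type1Set.1 h, rfl⟩
    · refine Or.inl ⟨h.1, ?_, h.2.2⟩
      rintro ⟨c, m⟩ hp
      have := hle _ hp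
      cases c <;> grind [subscriptBound]
  · rintro _ (h | ⟨π, h, rfl⟩)
    · exact type1Set_mono A.le_succ le_rfl i j h
    · exact cons_b_mem_type1Set.2 h

theorem type1Set_add_two {B A : ℕ} (hB : B ≤ A + 2) (i j : ℤ) :
    type1Set B (A + 2) i j =
      type1Set B (A + 1) i j ∪ List.cons (.a, A + 2) '' type1Set (min B A) (A + 1) (i - 1) j ∪
        List.cons (.ab, A + 2) '' type1Set (min B A) A (i - 1) (j - 1) := by
  apply Set.Subset.antisymm
  · intro π h
    have hle (p : CPart) (hp : p ∈ π) : p.2 ≤ A + 2 :=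
      (h.2.1 p hp).trans (subscriptBound_le hB le_rfl p.1)
    by_cases ha : (.a, A + 2) ∈ π
    · obtain ⟨π', rfl⟩ := h.1.exists_eq_cons ha hle
      exact Or.inl (Or.inr ⟨π', cons_a_mem_type1Set.1 h, rfl⟩)
    by_cases hab : (.ab, A + 2) ∈ π
    · obtain ⟨π', rfl⟩ := h.1.exists_eq_cons hab hle
      exact Or.inr ⟨π', cons_ab_mem_type1Set.1 h, rfl⟩
    · refine Or.inl (Or.inl ⟨h.1, ?_, h.2.2⟩)
      rintro ⟨c, m⟩ hp
      have hm := h.2.1 _ hp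
      have := hle _ hp
      cases c <;> grind [subscriptBound]
  · rintro _ ((h | ⟨π, h, rfl⟩) | ⟨π, h, rfl⟩)
    · exact type1Set_mono le_rfl (A + 1).le_succ i j h
    · exact cons_a_mem_type1Set.2 h
    · exact cons_ab_mem_type1Set.2 h

/-- The generating polynomial of `type1Set` with respect to the sum of the subscripts. -/
noncomputable def type1GF (B A : ℕ) (i j : ℤ) : ℕ[X] := weightGF wt (type1Set B A i j)

theorem type1GF_zero (i j : ℤ) : type1GF 0 0 i j = if i = 0 ∧ j = 0 then 1 else 0 := by
  rw [type1GF, type1Set_zero]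
  split_ifs <;> simp [wt]

theorem type1GF_zero_one (i j : ℤ) :
    type1GF 0 1 i j = type1GF 0 0 i j + X * type1GF 0 0 (i - 1) j := by
  rw [type1GF, type1Set_zero_one, weightGF_union_image (type1Set_finite _ _ _ _)
    (type1Set_finite _ _ _ _) List.cons_injective (wt_cons _), pow_one]
  · rfl
  · exact fun π _ => cons_notMem_type1Set (by simp [subscriptBound]) π

theorem type1GF_succ_succ (A : ℕ) (i j : ℤ) :
    type1GF (A + 1) (A + 1) i j = type1GF A (A + 1) i j + X ^ (A + 1) * type1GF A A i (j - 1) := by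
  rw [type1GF, type1Set_succ_succ, weightGF_union_image (type1Set_finite _ _ _ _)
    (type1Set_finite _ _ _ _) List.cons_injective (wt_cons _)]
  · rfl
  · exact fun π _ => cons_notMem_type1Set (by simp [subscriptBound]) π

theorem type1GF_succ_add_two (A : ℕ) (i j : ℤ) :
    type1GF (A + 1) (A + 2) i j = type1GF (A + 1) (A + 1) i j +
      X ^ (A + 2) * type1GF A (A + 1) (i - 1) j + X ^ (A + 2) * type1GF A A (i - 1) (j - 1) := by
  have hfin := type1Set_finite
  have hmin : min (A + 1) A = A := min_eq_right A.le_succ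
  rw [type1GF, type1Set_add_two (A + 1).le_succ, hmin, weightGF_union_image
    ((hfin _ _ _ _).union ((hfin _ _ _ _).image _)) (hfin _ _ _ _) List.cons_injective (wt_cons _),
    weightGF_union_image (hfin _ _ _ _) (hfin _ _ _ _) List.cons_injective (wt_cons _)]
  · rfl
  · exact fun π _ => cons_notMem_type1Set (by simp [subscriptBound]) π
  · rintro π - (h | ⟨π', -, h⟩)
    · exact cons_notMem_type1Set (by simp [subscriptBound]) π h
    · simp at h

theorem type1GF_eq_pairGF (A : ℕ) (i j : ℤ) :
    type1GF A A i j = pairGF A A i j ∧ type1GF A (A + 1) i j = pairGF A (A + 1) i j := by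
  induction A generalizing i j with
  | zero =>
    have h (i j : ℤ) : type1GF 0 0 i j = pairGF 0 0 i j := by
      rw [type1GF_zero, pairGF_zero]
    exact ⟨h i j, by rw [type1GF_zero_one, pairGF_zero_one, h, h]⟩
  | succ A ih =>
    have h : type1GF (A + 1) (A + 1) i j = pairGF (A + 1) (A + 1) i j := by
      rw [type1GF_succ_succ, pairGF_succ_succ, (ih _ _).1, (ih _ _).2]
    exact ⟨h, by rw [type1GF_succ_add_two, pairGF_succ_add_two le_rfl, h, (ih _ _).1, (ih _ _).2]⟩

/-! ### Type-1 partitions avoiding the subscript `L + 1 - l` -/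

/-- `π` has exactly `l` parts with subscript above `L + 1 - l` and none with subscript equal to it.
The subtraction is moved to the other side, as `l` may exceed `L`. -/
def IsSplit (L l : ℕ) (π : List CPart) : Prop :=
  π.countP (fun p => L + 2 ≤ p.2 + l) = l ∧ ∀ p ∈ π, p.2 + l ≠ L + 1

theorem isSplit_nil {L l : ℕ} : IsSplit L l [] ↔ l = 0 := by
  simp [IsSplit, eq_comm]

theorem isSplit_cons_succ {L l : ℕ} {p : CPart} {π : List CPart} (hp : L + 2 ≤ p.2 + l) :
    IsSplit (L + 1) (l + 1) (p :: π) ↔ IsSplit L l π := by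
  have hshift (m : ℕ) : L + 1 + 2 ≤ m + (l + 1) ↔ L + 2 ≤ m + l := by omega
  have hne (m : ℕ) : m + (l + 1) ≠ L + 1 + 1 ↔ m + l ≠ L + 1 := by omega
  simp only [IsSplit, List.countP_cons, List.forall_mem_cons, hshift, hne, hp, decide_true,
    if_true, Nat.add_right_cancel_iff]
  exact and_congr_right fun _ => and_iff_right (by omega)

theorem not_isSplit_zero_cons {L : ℕ} {p : CPart} (hp : L < p.2) (π : List CPart) :
    ¬ IsSplit L 0 (p :: π) := by
  rintro ⟨hcount, hne⟩
  have hp' := List.countP_eq_zero.1 hcount p List.mem_cons_self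
  have := hne p List.mem_cons_self
  rw [decide_eq_true_eq] at hp'
  omega

theorem IsType1.nodup_subscripts {π : List CPart} (h : IsType1 π) : (π.map Prod.snd).Nodup :=
  List.pairwise_map.2 (h.pairwise.imp fun hxy => by have := hxy.1; omega)

theorem isSplit_iff_eq_zero {L l : ℕ} {π : List CPart} (hπ : IsType1 π) (hle : ∀ p ∈ π, p.2 ≤ L) :
    IsSplit L l π ↔ l = 0 := by
  constructor
  · rintro ⟨hcount, -⟩
    by_contra hl
    have hsub : ((π.filter fun p => L + 2 ≤ p.2 + l).map Prod.snd).toFinset ⊆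
        Finset.Icc (L + 2 - l) L := by
      intro m hm
      obtain ⟨p, hp, rfl⟩ := List.mem_map.1 (List.mem_toFinset.1 hm)
      rw [List.mem_filter, decide_eq_true_eq] at hp
      rw [Finset.mem_Icc]
      exact ⟨by omega, hle p hp.1⟩
    have hcard := Finset.card_le_card hsub
    rw [List.toFinset_card_of_nodup (hπ.nodup_subscripts.sublist (List.filter_sublist.map _)),
      List.length_map, ← List.countP_eq_length_filter, hcount, Nat.card_Icc] at hcard
    omega
  · rintro rfl
    refine ⟨List.countP_eq_zero.2 fun p hp => ?_, fun p hp => ?_⟩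
    · have := hle p hp
      simp only [decide_eq_true_eq]
      omega
    · have := hle p hp
      omega

/-- The pairs `(π, l)` where `π` is a Type-1 partition counted by `Sb · r s t l L M` for some
`r`, `s`, `t` with `r + t = i` and `s + t = j`. -/
def splitSet (L M : ℕ) (i j : ℤ) : Set (List CPart × ℕ) :=
  {x | x.1 ∈ type1Set (L - x.2) M i j ∧ IsSplit L x.2 x.1}

theorem splitSet_finite (L M : ℕ) (i j : ℤ) : (splitSet L M i j).Finite := by
  refine ((type1Set_finite L M i j).prod (Set.finite_Iic (i + j).toNat)).subset ?_
  rintro ⟨π, l⟩ ⟨hπ, hl⟩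
  refine ⟨type1Set_mono (Nat.sub_le L l) le_rfl i j hπ, ?_⟩
  have hcount : l ≤ π.length := hl.1.symm.le.trans List.countP_le_length
  obtain ⟨hi, hj⟩ := hπ.2.2
  rw [← hi, ← hj, ← Nat.cast_add, Int.toNat_natCast, Set.mem_Iic]
  exact hcount.trans (length_le_aCount_add_bCount π)

theorem splitSet_of_add_nonpos (L M : ℕ) {i j : ℤ} (hij : i + j ≤ 0) :
    splitSet L M i j = if i = 0 ∧ j = 0 then {([], 0)} else ∅ := by
  ext ⟨π, l⟩
  simp only [splitSet, Set.mem_ofPred_eq, type1Set_of_add_nonpos _ _ hij]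
  split_ifs with h
  · rw [Set.mem_singleton_iff, Set.mem_singleton_iff, Prod.mk.injEq]
    exact and_congr_right fun hπ => hπ ▸ isSplit_nil
  · simp

theorem splitSet_self (L : ℕ) (i j : ℤ) :
    splitSet L L i j = (fun π => (π, 0)) '' type1Set L L i j := by
  have hsplit {π : List CPart} {l : ℕ} (h : π ∈ type1Set L L i j) : IsSplit L l π ↔ l = 0 :=
    isSplit_iff_eq_zero h.1 fun p hp =>
      (h.2.1 p hp).trans (subscriptBound_le le_rfl le_rfl p.1)
  ext ⟨π, l⟩
  constructor
  · rintro ⟨h, hl⟩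
    have hπ := type1Set_mono (Nat.sub_le L l) le_rfl i j h
    exact ⟨π, hπ, Prod.ext rfl ((hsplit hπ).1 hl).symm⟩
  · rintro ⟨π, h, hx⟩
    obtain ⟨rfl, rfl⟩ := Prod.mk.inj hx
    exact ⟨h, (hsplit h).2 rfl⟩

/-- Adds a largest part to the first component of a pair in `splitSet`, and counts it in the
second. -/
def consSplit (p : CPart) (x : List CPart × ℕ) : List CPart × ℕ := (p :: x.1, x.2 + 1)

theorem consSplit_injective (p : CPart) : Function.Injective (consSplit p) := by
  rintro ⟨π, l⟩ ⟨π', l'⟩ h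
  simpa [consSplit] using h

theorem cons_mem_splitSet {L M M' : ℕ} (hLM : L ≤ M) {i j i' j' : ℤ} {c : PColor}
    (h : ∀ B ≤ M, ∀ π, (c, M + 2) :: π ∈ type1Set B (M + 2) i j ↔ π ∈ type1Set B M' i' j')
    (π : List CPart) (l : ℕ) :
    ((c, M + 2) :: π, l) ∈ splitSet (L + 1) (M + 2) i j ↔
      ((c, M + 2) :: π, l) ∈ consSplit (c, M + 2) '' splitSet L M' i' j' := by
  cases l with
  | zero =>
    refine iff_of_false (fun hx => not_isSplit_zero_cons (by omega) π hx.2) ?_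
    rintro ⟨x, -, hx⟩
    exact x.2.succ_ne_zero (congrArg Prod.snd hx)
  | succ l =>
    rw [show ((c, M + 2) :: π, l + 1) = consSplit (c, M + 2) (π, l) from rfl,
      (consSplit_injective _).mem_set_image]
    simp only [consSplit, splitSet, Set.mem_ofPred_eq, Nat.add_sub_add_right]
    rw [h _ ((Nat.sub_le L l).trans hLM), isSplit_cons_succ (by omega)]

theorem splitSet_succ_add_two {L M : ℕ} (hLM : L ≤ M) (i j : ℤ) :
    splitSet (L + 1) (M + 2) i j = splitSet (L + 1) (M + 1) i j ∪
      consSplit (.a, M + 2) '' splitSet L (M + 1) (i - 1) j ∪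
        consSplit (.ab, M + 2) '' splitSet L M (i - 1) (j - 1) := by
  have ha := cons_mem_splitSet (i := i) (j := j) hLM
    fun B hB π => min_eq_left hB ▸ cons_a_mem_type1Set (B := B) (π := π)
  have hab := cons_mem_splitSet (i := i) (j := j) hLM
    fun B hB π => min_eq_left hB ▸ cons_ab_mem_type1Set (B := B) (π := π)
  apply Set.Subset.antisymm
  · rintro ⟨π, l⟩ hx
    have hπ := hx.1
    rw [type1Set_add_two (by omega)] at hπ
    rcases hπ with (hπ | ⟨π', -, rfl⟩) | ⟨π', -, rfl⟩
    · exact Or.inl (Or.inl ⟨hπ, hx.2⟩)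
    · exact Or.inl (Or.inr ((ha π' l).1 hx))
    · exact Or.inr ((hab π' l).1 hx)
  · rintro _ ((hx | ⟨x, hx, rfl⟩) | ⟨x, hx, rfl⟩)
    · exact ⟨type1Set_mono le_rfl (M + 1).le_succ i j hx.1, hx.2⟩
    · exact (ha x.1 (x.2 + 1)).2 ⟨x, hx, rfl⟩
    · exact (hab x.1 (x.2 + 1)).2 ⟨x, hx, rfl⟩

/-- The generating polynomial of `splitSet` with respect to the sum of the subscripts. -/
noncomputable def splitGF (L M : ℕ) (i j : ℤ) : ℕ[X] :=
  weightGF (fun x => wt x.1) (splitSet L M i j)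

theorem splitGF_of_add_nonpos (L M : ℕ) {i j : ℤ} (hij : i + j ≤ 0) :
    splitGF L M i j = if i = 0 ∧ j = 0 then 1 else 0 := by
  rw [splitGF, splitSet_of_add_nonpos L M hij]
  split_ifs <;> simp [wt]

theorem splitGF_self (L : ℕ) (i j : ℤ) : splitGF L L i j = type1GF L L i j := by
  rw [splitGF, splitSet_self, weightGF_image (type1Set_finite L L i j)
    (Prod.mk_left_injective 0) fun π => (zero_add (wt π)).symm, pow_zero, one_mul, type1GF]

theorem splitGF_succ_add_two {L M : ℕ} (hLM : L ≤ M) (i j : ℤ) :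
    splitGF (L + 1) (M + 2) i j = splitGF (L + 1) (M + 1) i j +
      X ^ (M + 2) * splitGF L (M + 1) (i - 1) j + X ^ (M + 2) * splitGF L M (i - 1) (j - 1) := by
  have hfin := splitSet_finite
  have hwt (c : PColor) (x : List CPart × ℕ) :
      wt (consSplit (c, M + 2) x).1 = M + 2 + wt x.1 := wt_cons _ _
  rw [splitGF, splitSet_succ_add_two hLM, weightGF_union_image
    ((hfin _ _ _ _).union ((hfin _ _ _ _).image _)) (hfin _ _ _ _) (consSplit_injective _) (hwt _),
    weightGF_union_image (hfin _ _ _ _) (hfin _ _ _ _) (consSplit_injective _) (hwt _)]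
  · rfl
  · exact fun x _ hx => cons_notMem_type1Set (by simp [subscriptBound]) x.1 hx.1
  · rintro x - (hx | ⟨y, -, hy⟩)
    · exact cons_notMem_type1Set (by simp [subscriptBound]) x.1 hx.1
    · simp [consSplit] at hy

theorem splitGF_eq_pairGF {L M : ℕ} (hLM : L ≤ M) {i j : ℤ} (hij : i + j ≤ L) :
    splitGF L M i j = pairGF L M i j := by
  induction M using Nat.strong_induction_on generalizing L i j with
  | _ M ih =>
    obtain rfl | hlt := hLM.eq_or_lt
    · rw [splitGF_self, (type1GF_eq_pairGF L i j).1]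
    cases L with
    | zero => rw [splitGF_of_add_nonpos 0 M hij, pairGF_of_add_nonpos 0 M hij]
    | succ L =>
      obtain ⟨M, rfl⟩ : ∃ K, M = K + 2 := ⟨M - 2, by omega⟩
      have hLM' : L ≤ M := by omega
      rw [splitGF_succ_add_two hLM', pairGF_succ_add_two hLM', ih (M + 1), ih (M + 1), ih M] <;>
        omega

theorem forall_le_subscriptBound_iff {L M l : ℕ} {π : List CPart} (hπ : IsType1 π) :
    (∀ p ∈ π, p.2 ≤ subscriptBound (L - l) M p.1) ↔
      (∀ p ∈ π, p.1 = .a → p.2 ≤ M) ∧ (∀ p ∈ π, p.1 = .b → (p.2 : ℤ) ≤ (L : ℤ) - (l : ℤ)) ∧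
        ∀ p ∈ π, p.1 = .ab → p.2 ≤ M := by
  rw [← forall₂_and, ← forall₂_and]
  refine forall₂_congr fun p hp => ?_
  have hpos := (hπ.1 p hp).1
  obtain ⟨_ | _ | _, m⟩ := p <;> grind [subscriptBound]

theorem isSplit_iff {L l : ℕ} {π : List CPart}
    (hb : ∀ p ∈ π, p.1 = .b → (p.2 : ℤ) ≤ (L : ℤ) - (l : ℤ)) :
    IsSplit L l π ↔
      (π.filter (fun p => (p.1 = .a ∨ p.1 = .ab) ∧
        (L : ℤ) - (l : ℤ) + 2 ≤ (p.2 : ℤ))).length = l ∧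
      ∀ p ∈ π, (p.2 : ℤ) ≠ (L : ℤ) - (l : ℤ) + 1 := by
  rw [← List.countP_eq_length_filter, IsSplit]
  refine and_congr (Eq.congr_left (List.countP_congr fun p hp => ?_)) ?_
  · have := hb p hp
    obtain ⟨_ | _ | _, m⟩ := p <;> grind
  · exact forall₂_congr fun p _ => by omega

theorem Sb_eq_ncard {n r s t l L M i j : ℕ} (hi : r + t = i) (hj : s + t = j) :
    Sb n r s t l L M = {x ∈ splitSet L M i j | wt x.1 = n ∧ colorCount .a x.1 = r ∧
      colorCount .b x.1 = s ∧ colorCount .ab x.1 = t ∧ x.2 = l}.ncard := by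
  rw [Sb, ← Set.ncard_image_of_injective _ (Prod.mk_left_injective l)]
  congr 1
  ext ⟨π, l'⟩
  constructor
  · rintro ⟨π, ⟨hπ, hr, ha, hs, hb, ht, hab, hcount, hne, hn⟩, hx⟩
    obtain ⟨rfl, rfl⟩ := Prod.mk.inj hx
    refine ⟨⟨⟨hπ, (forall_le_subscriptBound_iff hπ).2 ⟨ha, hb, hab⟩, ?_, ?_⟩,
      (isSplit_iff hb).2 ⟨hcount, hne⟩⟩, hn, hr, hs, ht, rfl⟩
    · rw [aCount, hr, ht, hi]
    · rw [bCount, hs, ht, hj]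
  · rintro ⟨⟨⟨hπ, hle, -⟩, hsplit⟩, hn, hr, hs, ht, rfl⟩
    obtain ⟨ha, hb, hab⟩ := (forall_le_subscriptBound_iff hπ).1 hle
    obtain ⟨hcount, hne⟩ := (isSplit_iff hb).1 hsplit
    exact ⟨π, ⟨hπ, hr, ha, hs, hb, ht, hab, hcount, hne, hn⟩, rfl⟩

theorem ite_Sb_eq_ncard (n r s t l L M i j : ℕ) :
    (if r + t = i ∧ s + t = j then Sb n r s t l L M else 0) =
      {x ∈ splitSet L M i j | wt x.1 = n ∧ colorCount .a x.1 = r ∧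
        colorCount .b x.1 = s ∧ colorCount .ab x.1 = t ∧ x.2 = l}.ncard := by
  split_ifs with h
  · exact Sb_eq_ncard h.1 h.2
  · rw [eq_comm, Set.ncard_eq_zero ((splitSet_finite L M i j).sep _)]
    refine Set.eq_empty_of_forall_notMem ?_
    rintro ⟨π, l'⟩ ⟨⟨hπ, -⟩, -, rfl, rfl, rfl, -⟩
    exact h ⟨Nat.cast_inj.1 hπ.2.2.1, Nat.cast_inj.1 hπ.2.2.2⟩

theorem finsum_Sb_eq_coeff_splitGF (n i j L M : ℕ) :
    ∑ᶠ (r : ℕ) (s : ℕ) (t : ℕ) (l : ℕ),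
      (if r + t = i ∧ s + t = j then Sb n r s t l L M else 0) = (splitGF L M i j).coeff n := by
  have hfin := splitSet_finite L M i j
  rw [splitGF, coeff_weightGF hfin, ← finsum_ncard_fiber (hfin.sep _) fun x => colorCount .a x.1]
  refine finsum_congr fun r => ?_
  rw [← finsum_ncard_fiber ((hfin.sep _).sep _) fun x => colorCount .b x.1]
  refine finsum_congr fun s => ?_
  rw [← finsum_ncard_fiber (((hfin.sep _).sep _).sep _) fun x => colorCount .ab x.1]
  refine finsum_congr fun t => ?_
  rw [← finsum_ncard_fiber ((((hfin.sep _).sep _).sep _).sep _) Prod.snd]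
  refine finsum_congr fun l => ?_
  rw [ite_Sb_eq_ncard]
  congr 1
  ext x
  simp only [Set.mem_ofPred_eq, and_assoc]

end

/-- Theorem 2: for `M ≥ L ≥ i + j`,
`V(n; i, j, L, M) = ∑_{r+t=i, s+t=j} ∑_{l ≥ 0} S(n; r, s, t, l, L, M)`. -/
theorem double_bounded_refined_schur_colored (n i j L M : ℕ)
    (hLM : L ≤ M) (hij : i + j ≤ L) :
    Vb n i j L M = ∑ᶠ (r : ℕ) (s : ℕ) (t : ℕ) (l : ℕ),
      (if r + t = i ∧ s + t = j then Sb n r s t l L M else 0) := by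
  rw [Vb_eq_coeff_pairGF, finsum_Sb_eq_coeff_splitGF,
    splitGF_eq_pairGF hLM (i := i) (j := j) (by exact_mod_cast hij)]
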